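/- arXiv:2011.11165 — 3 statements merged into one kernel-verified Lean document; each statement's English description precedes it below -/
import Mathlib

section
/- Let A = ℂ[ℤ/2] be the group algebra of ℤ/2 over ℂ (the algebra MonoidAlgebra ℂ (ZMod 2), i.e. ℂ[x]/(x² = 1)), and let τ : A ≃ A be the ℂ-algebra automorphism induced by the nontrivial character of ℤ/2, i.e. τ fixes 1 and sends the generator x to −x. Then there exists a ℂ-algebra isomorphism e : A ⊗[ℂ] A ≅ A × A which intertwines the diagonal automorphism τ ⊗ τ of A ⊗[ℂ] A with the componentwise automorphism τ × τ of A × A, i.e. e ∘ (τ ⊗ τ) = (τ × τ) ∘ e. -/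
open scoped TensorProduct

/-- The group algebra `A = ℂ[ℤ/2] = ℂ[x]/(x² = 1)`. -/
abbrev GroupAlgZ2 : Type := MonoidAlgebra ℂ (Multiplicative (ZMod 2))

/-- The generator `x` of the group algebra `ℂ[ℤ/2]`. -/
noncomputable abbrev GroupAlgZ2.x : GroupAlgZ2 :=
  MonoidAlgebra.single (Multiplicative.ofAdd (1 : ZMod 2)) 1

/-! Since `τ` commutes with itself, `a ⊗ b ↦ (a * b, a * τ b)` is equivariant. As `1, x` span `A`,
every element of `A ⊗ A` has the form `a ⊗ 1 + b ⊗ x`, which is sent to `(a + b * x, a - b * x)`.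
Both `2` and `x` are units, so `a` and `b` are recovered from the sum and the difference. -/

theorem exists_eq_tmul_add_tmul_of_span_pair_eq_top {R M N : Type*} [CommSemiring R]
    [AddCommMonoid M] [Module R M] [AddCommMonoid N] [Module R N] {x y : N}
    (hxy : Submodule.span R {x, y} = ⊤) (z : M ⊗[R] N) :
    ∃ a b : M, z = a ⊗ₜ x + b ⊗ₜ y := by
  induction z with
  | zero => exact ⟨0, 0, by simp⟩
  | tmul m n =>
    obtain ⟨r, s, rfl⟩ := Submodule.mem_span_pair.mp (hxy ▸ Submodule.mem_top : n ∈ _)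
    exact ⟨r • m, s • m, by simp only [TensorProduct.tmul_add, TensorProduct.tmul_smul,
      TensorProduct.smul_tmul']⟩
  | add z w hz hw =>
    obtain ⟨a, b, rfl⟩ := hz
    obtain ⟨c, d, rfl⟩ := hw
    exact ⟨a + c, b + d, by simp only [TensorProduct.add_tmul, add_add_add_comm]⟩

section TwistedMul

variable {R A : Type*}

section CommSemiring

variable [CommSemiring R] [CommSemiring A] [Algebra R A]

/-- The torsor map `a ⊗ b ↦ (a * b, a * σ b)` of an algebra `A` with an endomorphism `σ`. For
functions on a space acted on by `σ`, its components restrict to the diagonal and to the graph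
of `σ`. -/
noncomputable def twistedMul (σ : A →ₐ[R] A) : A ⊗[R] A →ₐ[R] A × A :=
  (Algebra.TensorProduct.lmul' R).prod (Algebra.TensorProduct.productMap (AlgHom.id R A) σ)

@[simp]
theorem twistedMul_tmul (σ : A →ₐ[R] A) (a b : A) :
    twistedMul σ (a ⊗ₜ b) = (a * b, a * σ b) := by
  simp [twistedMul]

theorem twistedMul_comp_map (σ : A →ₐ[R] A) :
    (twistedMul σ).comp (Algebra.TensorProduct.map σ σ) = (σ.prodMap σ).comp (twistedMul σ) := by
  ext <;> simp [AlgHom.prodMap]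

end CommSemiring

section CommRing

variable [CommSemiring R] [CommRing A] [Algebra R A] {σ : A →ₐ[R] A} {u : A}

theorem twistedMul_tmul_one_add_tmul (hσ : σ u = -u) (a b : A) :
    twistedMul σ (a ⊗ₜ 1 + b ⊗ₜ u) = (a + b * u, a - b * u) := by
  simp [hσ, sub_eq_add_neg]

theorem twistedMul_surjective (h2 : IsUnit (2 : A)) (hu : IsUnit u) (hσ : σ u = -u) :
    Function.Surjective (twistedMul σ) := by
  rintro ⟨c, d⟩
  obtain ⟨half, h_half⟩ := h2.exists_right_inv
  obtain ⟨v, hv⟩ := hu.exists_right_inv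
  refine ⟨(half * (c + d)) ⊗ₜ 1 + (half * (c - d) * v) ⊗ₜ u, ?_⟩
  rw [twistedMul_tmul_one_add_tmul hσ, Prod.mk.injEq]
  constructor
  · linear_combination c * h_half + half * (c - d) * hv
  · linear_combination d * h_half - half * (c - d) * hv

theorem twistedMul_injective (h2 : IsUnit (2 : A)) (hu : IsUnit u)
    (hspan : Submodule.span R {1, u} = ⊤) (hσ : σ u = -u) :
    Function.Injective (twistedMul σ) := by
  intro z w hzw
  obtain ⟨a, b, rfl⟩ := exists_eq_tmul_add_tmul_of_span_pair_eq_top hspan z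
  obtain ⟨c, d, rfl⟩ := exists_eq_tmul_add_tmul_of_span_pair_eq_top hspan w
  simp only [twistedMul_tmul_one_add_tmul hσ, Prod.mk.injEq] at hzw
  obtain ⟨hsum, hdiff⟩ := hzw
  have hac : a = c := h2.mul_left_cancel (by linear_combination hsum + hdiff)
  have hbd : b = d := hu.mul_right_cancel (by linear_combination hsum - hac)
  rw [hac, hbd]

end CommRing

end TwistedMul

theorem cheshire_fusion_rule_general {R A : Type*} [CommSemiring R] [CommRing A] [Algebra R A]
    (σ : A →ₐ[R] A) {u : A} (h2 : IsUnit (2 : A)) (hu : IsUnit u)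
    (hspan : Submodule.span R {1, u} = ⊤) (hσ : σ u = -u) :
    ∃ e : (A ⊗[R] A) ≃ₐ[R] (A × A),
      ∀ z, e (Algebra.TensorProduct.map σ σ z) = (σ (e z).1, σ (e z).2) :=
  ⟨AlgEquiv.ofBijective (twistedMul σ)
      ⟨twistedMul_injective h2 hu hspan hσ, twistedMul_surjective h2 hu hσ⟩,
    DFunLike.congr_fun (twistedMul_comp_map σ)⟩

theorem span_one_single_ofAdd_one_eq_top (R : Type*) [Semiring R] :
    Submodule.span R {1, MonoidAlgebra.single (Multiplicative.ofAdd (1 : ZMod 2)) (1 : R)} = ⊤ := by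
  have huniv : (Set.univ : Set (Multiplicative (ZMod 2))) = {1, Multiplicative.ofAdd 1} := by
    ext g
    revert g
    decide
  rw [← (MonoidAlgebra.basis (Multiplicative (ZMod 2)) R).span_eq, ← Set.image_univ, huniv,
    Set.image_pair, MonoidAlgebra.basis_apply, MonoidAlgebra.basis_apply, MonoidAlgebra.one_def]

theorem GroupAlgZ2.isUnit_x : IsUnit GroupAlgZ2.x :=
  (Group.isUnit (Multiplicative.ofAdd (1 : ZMod 2))).map (MonoidAlgebra.of ℂ _)

theorem GroupAlgZ2.isUnit_two : IsUnit (2 : GroupAlgZ2) := by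
  simpa only [map_ofNat] using (IsUnit.mk0 (2 : ℂ) two_ne_zero).map (algebraMap ℂ GroupAlgZ2)

/-- Let `τ : ℂ[ℤ/2] ≃ ℂ[ℤ/2]` be the algebra automorphism induced by the
nontrivial character of `ℤ/2`, i.e. `τ 1 = 1` and `τ x = -x`.  Then there is a
ℂ-algebra isomorphism `e : A ⊗[ℂ] A ≅ A × A` intertwining `τ ⊗ τ` with the
componentwise automorphism `τ × τ`. -/
theorem cheshire_fusion_rule
    (τ : GroupAlgZ2 ≃ₐ[ℂ] GroupAlgZ2)
    (hτ : τ GroupAlgZ2.x = - GroupAlgZ2.x) :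
    ∃ e : (GroupAlgZ2 ⊗[ℂ] GroupAlgZ2) ≃ₐ[ℂ] (GroupAlgZ2 × GroupAlgZ2),
      ∀ a, e ((Algebra.TensorProduct.congr τ τ) a) = (τ (e a).1, τ (e a).2) := by
  exact cheshire_fusion_rule_general (τ : GroupAlgZ2 →ₐ[ℂ] GroupAlgZ2) GroupAlgZ2.isUnit_two
    GroupAlgZ2.isUnit_x (span_one_single_ofAdd_one_eq_top ℂ) hτ
end

section
/- Let A = ℂ[ℤ/2] be the group algebra of ℤ/2 over ℂ (the algebra MonoidAlgebra ℂ (ZMod 2), i.e. ℂ[x]/(x² = 1)), and let τ : A ≃ A be the ℂ-algebra automorphism induced by the nontrivial character of ℤ/2, i.e. τ fixes 1 and sends the generator x to −x. Then the only ideals I of A satisfying τ(I) = I are the zero ideal and A itself. -/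
/-!
An operator that is diagonal in a basis, minus its eigenvalue at one basis vector, kills that
coordinate and never enlarges supports. Hence, when the joint eigenvalues of a family of diagonal
operators tell the basis vectors apart, a nonzero vector of minimal support in an invariant
submodule is a multiple of a basis vector. In a group algebra over a field such a vector is a unit.
-/

section DiagonalOperators

open Module

lemma repr_apply_of_apply_basis_eq_smul {κ R M : Type*} [CommSemiring R] [AddCommMonoid M]
    [Module R M] (b : Basis κ R M) {f : End R M} {w : κ → R} (hf : ∀ j, f (b j) = w j • b j)
    (v : M) (j : κ) : b.repr (f v) j = w j * b.repr v j := by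
  suffices b.coord j ∘ₗ f = w j • b.coord j from LinearMap.congr_fun this v
  refine b.ext fun l => ?_
  obtain rfl | hl := eq_or_ne l j <;> simp [*]

variable {ι κ R M : Type*} [CommRing R] [NoZeroDivisors R] [AddCommGroup M] [Module R M]
  {b : Basis κ R M} {f : ι → End R M} {w : ι → κ → R} {p : Submodule R M}

lemma exists_mem_support_repr_ssubset (hf : ∀ i j, f i (b j) = w i j • b j)
    (hw : Function.Injective fun j i => w i j) (hp : ∀ i, p ∈ (f i).invtSubmodule)
    {v : M} (hv : v ∈ p) (hv_supp : (b.repr v).support.Nontrivial) :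
    ∃ u ∈ p, u ≠ 0 ∧ (b.repr u).support ⊂ (b.repr v).support := by
  obtain ⟨j, hj, l, hl, hjl⟩ := hv_supp
  obtain ⟨i, hi⟩ : ∃ i, w i j ≠ w i l := Function.ne_iff.mp (hw.ne hjl)
  let u := f i v - w i j • v
  have repr_u (m : κ) : b.repr u m = (w i m - w i j) * b.repr v m := by
    simp [u, repr_apply_of_apply_basis_eq_smul b (hf i), sub_mul]
  have repr_u_j : b.repr u j = 0 := by rw [repr_u, sub_self, zero_mul]
  have repr_u_l : b.repr u l ≠ 0 :=
    repr_u l ▸ mul_ne_zero (sub_ne_zero.mpr hi.symm) (Finsupp.mem_support_iff.mp hl)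
  refine ⟨u, p.sub_mem (hp i hv) (p.smul_mem _ hv), ?_, ?_⟩
  · intro hu
    simp [hu] at repr_u_l
  · refine Finset.ssubset_iff_of_subset (fun m hm => ?_) |>.mpr
      ⟨j, hj, Finsupp.notMem_support_iff.mpr repr_u_j⟩
    rw [Finsupp.mem_support_iff, repr_u] at hm
    exact Finsupp.mem_support_iff.mpr (right_ne_zero_of_mul hm)

theorem exists_smul_basis_mem_of_mem_invtSubmodule (hf : ∀ i j, f i (b j) = w i j • b j)
    (hw : Function.Injective fun j i => w i j) (hp : ∀ i, p ∈ (f i).invtSubmodule)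
    (hp_ne : p ≠ ⊥) : ∃ j, ∃ c ≠ (0 : R), c • b j ∈ p := by
  obtain ⟨v, hv_min⟩ : ∃ v, MinimalFor (fun u => u ∈ p ∧ u ≠ 0) (fun u => (b.repr u).support) v :=
    exists_minimalFor_of_wellFoundedLT _ _ (p.exists_mem_ne_zero_of_ne_bot hp_ne)
  obtain ⟨hv, hv_ne⟩ := hv_min.prop
  have hv_supp : (b.repr v).support.Nonempty := by simpa using hv_ne
  obtain hv_single | hv_nontrivial := hv_supp.exists_eq_singleton_or_nontrivial
  · obtain ⟨j, c, hc, hvj⟩ :=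
      Finsupp.card_support_eq_one'.mp (Finset.card_eq_one.mpr hv_single)
    exact ⟨j, c, hc, by rwa [← b.repr_symm_single, ← hvj, b.repr.symm_apply_apply]⟩
  · obtain ⟨u, hu, hu_ne, hu_lt⟩ := exists_mem_support_repr_ssubset hf hw hp hv hv_nontrivial
    exact absurd ⟨hu, hu_ne⟩ (hv_min.not_prop_of_lt hu_lt)

end DiagonalOperators

lemma isUnit_monoidAlgebra_single {R G : Type*} [Semiring R] [Monoid G] {r : R} {g : G}
    (hr : IsUnit r) (hg : IsUnit g) : IsUnit (MonoidAlgebra.single g r) :=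
  (Prod.isUnit_iff (x := (r, g)).mpr ⟨hr, hg⟩).map MonoidAlgebra.singleHom

theorem cheshire_algebra_equivariantly_simple_general {ι K G : Type*} [Field K] [Group G]
    {χ : ι → G → K} (hχ : Function.Injective fun g i => χ i g)
    (τ : ι → MonoidAlgebra K G →ₐ[K] MonoidAlgebra K G)
    (hτ : ∀ i g, τ i (.single g 1) = .single g (χ i g))
    (I : Ideal (MonoidAlgebra K G)) (hI : ∀ i, I.map (τ i) ≤ I) : I = ⊥ ∨ I = ⊤ := by
  refine or_iff_not_imp_left.mpr fun hI_ne => ?_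
  obtain ⟨g, c, hc, hgc⟩ : ∃ g, ∃ c ≠ (0 : K),
      c • MonoidAlgebra.basis G K g ∈ I.restrictScalars K :=
    exists_smul_basis_mem_of_mem_invtSubmodule (f := fun i => (τ i).toLinearMap)
      (by simpa using hτ) hχ (fun i _ hv => hI i (Ideal.mem_map_of_mem (τ i) hv))
      (by simpa using hI_ne)
  have single_mem : MonoidAlgebra.single g c ∈ I := by simpa using hgc
  exact I.eq_top_of_isUnit_mem single_mem (isUnit_monoidAlgebra_single hc.isUnit (Group.isUnit g))

section NontrivialCharacter

/-- The nontrivial character of `ℤ/2` with values in `R`, as a bare function because only its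
values enter. The group is written multiplicatively to match `GroupAlgZ2`. -/
def zmodTwoSign (R : Type*) [Ring R] (g : Multiplicative (ZMod 2)) : R :=
  if g = 1 then 1 else -1

lemma multiplicative_zmod_two_eq_one_or_ofAdd_one :
    ∀ g : Multiplicative (ZMod 2), g = 1 ∨ g = .ofAdd 1 := by
  decide

lemma zmodTwoSign_one (R : Type*) [Ring R] : zmodTwoSign R 1 = 1 := if_pos rfl

lemma zmodTwoSign_ofAdd_one (R : Type*) [Ring R] : zmodTwoSign R (.ofAdd 1) = -1 :=
  if_neg (by decide)

lemma zmodTwoSign_injective (R : Type*) [Ring R] [NeZero (2 : R)] :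
    Function.Injective (zmodTwoSign R) := by
  have one_ne_neg_one : (1 : R) ≠ -1 := fun h =>
    two_ne_zero (one_add_one_eq_two.symm.trans (eq_neg_iff_add_eq_zero.mp h))
  intro g h hgh
  obtain rfl | rfl := multiplicative_zmod_two_eq_one_or_ofAdd_one g <;>
    obtain rfl | rfl := multiplicative_zmod_two_eq_one_or_ofAdd_one h <;>
    simp_all [zmodTwoSign_one, zmodTwoSign_ofAdd_one, eq_comm]

lemma map_single_eq_single_zmodTwoSign {R : Type*} [Ring R]
    (τ : MonoidAlgebra R (Multiplicative (ZMod 2)) →+* MonoidAlgebra R (Multiplicative (ZMod 2)))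
    (hτ : τ (.single (.ofAdd 1) 1) = -.single (.ofAdd 1) 1) (g : Multiplicative (ZMod 2)) :
    τ (.single g 1) = .single g (zmodTwoSign R g) := by
  obtain rfl | rfl := multiplicative_zmod_two_eq_one_or_ofAdd_one g
  · rw [zmodTwoSign_one, ← MonoidAlgebra.one_def, map_one]
  · rw [zmodTwoSign_ofAdd_one, MonoidAlgebra.single_neg, hτ]

end NontrivialCharacter

/-- Let `τ : ℂ[ℤ/2] ≃ ℂ[ℤ/2]` be the algebra automorphism induced by the
nontrivial character of `ℤ/2`, i.e. `τ 1 = 1` and `τ x = -x`.  The only ideals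
`I` of `A = ℂ[ℤ/2]` with `τ(I) = I` are the zero ideal and `A` itself. -/
theorem cheshire_algebra_equivariantly_simple
    (τ : GroupAlgZ2 ≃ₐ[ℂ] GroupAlgZ2)
    (hτ : τ GroupAlgZ2.x = - GroupAlgZ2.x) :
    ∀ I : Ideal GroupAlgZ2, Ideal.map τ I = I → I = ⊥ ∨ I = ⊤ := by
  intro I hI
  exact cheshire_algebra_equivariantly_simple_general (χ := fun _ : Unit => zmodTwoSign ℂ)
    (fun _ _ h => zmodTwoSign_injective ℂ (congr_fun h ())) (fun _ => τ)
    (fun _ => map_single_eq_single_zmodTwoSign (τ : GroupAlgZ2 →+* GroupAlgZ2) hτ)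
    I fun _ => hI.le
end

section
/- Let A be a nonzero finite-dimensional ℂ-algebra equipped with a ℤ/2-grading A = A₀ ⊕ A₁ (a GradedAlgebra structure indexed by ZMod 2), and suppose that every nonzero homogeneous element of A is a unit. Then the even part A₀ is one-dimensional, spanned by 1, the odd part A₁ has dimension at most 1, and if A₁ ≠ 0 then A₁ contains an element e with e² = 1. -/
/-!
A domain that is algebraic over an algebraically closed field `K` is `K` itself; applied to the
degree-zero part this gives `A₀ = K`. If `u ≠ 0` has degree `i` and `n • i = 0`, then `u ^ n` is a
nonzero scalar, and dividing `u` by an `n`-th root of it gives `e` with `e ^ n = 1`. Multiplication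
by `e ^ (n - 1)` sends `A_i` into `A₀ = K`, so `A_i` is the line through `e`.
-/

section GradedDomain

variable {ι K A : Type*} [Field K] [Ring A] [Algebra K A] {𝒜 : ι → Submodule K A}

/-- The graded analogue of `NoZeroDivisors`: a product of two nonzero homogeneous elements is
nonzero. Inhomogeneous zero divisors are allowed, such as `1 + e` when `e ^ 2 = 1`. -/
def NoHomogeneousZeroDivisors (𝒜 : ι → Submodule K A) : Prop :=
  ∀ ⦃i j : ι⦄ ⦃a b : A⦄, a ∈ 𝒜 i → b ∈ 𝒜 j → a * b = 0 → a = 0 ∨ b = 0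

theorem noHomogeneousZeroDivisors_of_isUnit (hunit : ∀ i, ∀ a ∈ 𝒜 i, a ≠ 0 → IsUnit a) :
    NoHomogeneousZeroDivisors 𝒜 := fun i _ a _ ha _ hab =>
  or_iff_not_imp_left.mpr fun ha0 => (hunit i a ha ha0).mul_right_eq_zero.mp hab

variable [AddMonoid ι] [SetLike.GradedMonoid 𝒜]

theorem eq_span_singleton_of_pow_eq_one (hzero : 𝒜 0 = Submodule.span K {(1 : A)})
    {i : ι} {n : ℕ} (hn : n ≠ 0) (hni : n • i = 0) {e : A} (he : e ∈ 𝒜 i) (hen : e ^ n = 1) :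
    𝒜 i = Submodule.span K {e} := by
  refine le_antisymm (fun a ha => ?_) (by simpa using he)
  obtain ⟨m, rfl⟩ := Nat.exists_eq_succ_of_ne_zero hn
  have hmem : e ^ m * a ∈ 𝒜 0 := by
    simpa only [← succ_nsmul, hni] using SetLike.mul_mem_graded (SetLike.pow_mem_graded m he) ha
  obtain ⟨c, hc⟩ := Submodule.mem_span_singleton.mp (hzero ▸ hmem)
  refine Submodule.mem_span_singleton.mpr ⟨c, ?_⟩
  calc c • e = e * (c • 1) := by rw [mul_smul_comm, mul_one]
    _ = e ^ (m + 1) * a := by rw [hc, ← mul_assoc, pow_succ']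
    _ = a := by rw [hen, one_mul]

namespace NoHomogeneousZeroDivisors

theorem isDomain_zero [Nontrivial A] (h : NoHomogeneousZeroDivisors 𝒜) : IsDomain (𝒜 0) :=
  have : Nontrivial (𝒜 0) := ⟨0, 1, fun h01 => zero_ne_one (congrArg Subtype.val h01)⟩
  have : NoZeroDivisors (𝒜 0) := ⟨fun {a b} hab =>
    (h a.2 b.2 (congrArg Subtype.val hab)).imp Subtype.ext Subtype.ext⟩
  NoZeroDivisors.to_isDomain _

theorem pow_ne_zero (h : NoHomogeneousZeroDivisors 𝒜) {i : ι} {a : A} (ha : a ∈ 𝒜 i)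
    (ha0 : a ≠ 0) (n : ℕ) : a ^ n ≠ 0 := by
  have : Nontrivial A := nontrivial_of_ne a 0 ha0
  induction n with
  | zero => simp
  | succ n ih =>
    rw [pow_succ]
    exact fun h0 => (h (SetLike.pow_mem_graded n ha) ha h0).elim ih ha0

variable [IsAlgClosed K] [Algebra.IsIntegral K (𝒜 0)]

theorem zero_eq_span_one (h : NoHomogeneousZeroDivisors 𝒜) :
    𝒜 0 = Submodule.span K {(1 : A)} := by
  nontriviality A
  have := h.isDomain_zero
  refine le_antisymm (fun a ha => ?_) (by simpa using SetLike.one_mem_graded 𝒜)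
  obtain ⟨c, hc⟩ :=
    (IsAlgClosed.algebraMap_bijective_of_isIntegral (k := K) (K := 𝒜 0)).surjective ⟨a, ha⟩
  refine Submodule.mem_span_singleton.mpr ⟨c, ?_⟩
  rw [← Algebra.algebraMap_eq_smul_one]
  exact congrArg Subtype.val hc

theorem exists_pow_eq_one (h : NoHomogeneousZeroDivisors 𝒜) {i : ι} {n : ℕ} (hn : n ≠ 0)
    (hni : n • i = 0) (hi : 𝒜 i ≠ ⊥) : ∃ e ∈ 𝒜 i, e ^ n = 1 := by
  obtain ⟨u, hu, hu0⟩ := Submodule.exists_mem_ne_zero_of_ne_bot hi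
  have hmem : u ^ n ∈ 𝒜 0 := hni ▸ SetLike.pow_mem_graded n hu
  obtain ⟨c, hc⟩ := Submodule.mem_span_singleton.mp (h.zero_eq_span_one ▸ hmem)
  have hc0 : c ≠ 0 := by
    rintro rfl
    exact h.pow_ne_zero hu hu0 n (by rw [← hc, zero_smul])
  obtain ⟨s, hs⟩ := IsAlgClosed.exists_pow_nat_eq c (Nat.pos_of_ne_zero hn)
  refine ⟨s⁻¹ • u, Submodule.smul_mem _ _ hu, ?_⟩
  rw [smul_pow, ← hc, smul_smul, inv_pow, hs, inv_mul_cancel₀ hc0, one_smul]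

theorem rank_le_one (h : NoHomogeneousZeroDivisors 𝒜) {i : ι} {n : ℕ} (hn : n ≠ 0)
    (hni : n • i = 0) : Module.rank K (𝒜 i) ≤ 1 := by
  by_cases hi : 𝒜 i = ⊥
  · rw [hi, rank_bot]
    exact zero_le_one
  · obtain ⟨e, he, hen⟩ := h.exists_pow_eq_one hn hni hi
    rw [eq_span_singleton_of_pow_eq_one h.zero_eq_span_one hn hni he hen]
    exact (rank_span_le {e}).trans_eq (Cardinal.mk_singleton e)

end NoHomogeneousZeroDivisors

theorem super_division_algebra_over_complex_general [IsAlgClosed K]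
    [Algebra.IsIntegral K (𝒜 0)] (h : NoHomogeneousZeroDivisors 𝒜) :
    𝒜 0 = Submodule.span K {(1 : A)} ∧
    ∀ (i : ι) (n : ℕ), n ≠ 0 → n • i = 0 →
      Module.rank K (𝒜 i) ≤ 1 ∧ (𝒜 i ≠ ⊥ → ∃ e ∈ 𝒜 i, e ^ n = 1) :=
  ⟨h.zero_eq_span_one, fun _ _ hn hni => ⟨h.rank_le_one hn hni, h.exists_pow_eq_one hn hni⟩⟩

end GradedDomain

/-- Let `A` be a nonzero finite-dimensional ℂ-algebra with a `ℤ/2`-grading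
`A = A₀ ⊕ A₁` in which every nonzero homogeneous element is a unit (a
super division algebra over `ℂ`).  Then the even part `A₀` is one-dimensional,
spanned by `1`; the odd part `A₁` has dimension at most `1`; and if `A₁ ≠ 0`
then `A₁` contains an element `e` with `e ^ 2 = 1`. -/
theorem super_division_algebra_over_complex
    (A : Type*) [Ring A] [Algebra ℂ A] [Nontrivial A] [FiniteDimensional ℂ A]
    (𝒜 : ZMod 2 → Submodule ℂ A) [GradedAlgebra 𝒜]
    (hunit : ∀ i : ZMod 2, ∀ a ∈ 𝒜 i, a ≠ 0 → IsUnit a) :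
    𝒜 0 = Submodule.span ℂ {(1 : A)} ∧
    Module.finrank ℂ (𝒜 1) ≤ 1 ∧
    (𝒜 1 ≠ ⊥ → ∃ e ∈ 𝒜 1, e ^ 2 = 1) := by
  obtain ⟨hzero, hodd⟩ :=
    super_division_algebra_over_complex_general (noHomogeneousZeroDivisors_of_isUnit hunit)
  obtain ⟨hrank, hsqrt⟩ := hodd 1 2 two_ne_zero (by decide)
  exact ⟨hzero, Module.finrank_le_of_rank_le (by exact_mod_cast hrank), hsqrt⟩
end
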